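/- Convergence of the VI implies convergence of the RVI: with J_0 = V_0 continuous and strictly positive, J_n generated by the VI with constant Λ > 0 and V_n by the RVI with reference point x_0, if J_n converges pointwise on S to a function J_∞ with J_∞(x_0) > 0, then V_n converges pointwise on S to the function x ↦ Λ · J_∞(x) / J_∞(x_0). -/

import Mathlib

open MeasureTheory Filter Topology

/-!
The Bellman operator `T f x = inf_u e^{k(x,u)} ∫ f dp(·|x,u)` is positively homogeneous, so the RVI
iterates are positive multiples of the VI iterates: by induction,
`V_{n+1} = (Λ / J_n(x₀)) • J_{n+1}`. Letting `n → ∞` gives the claim. What has to be checked is that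
every `J_n(x₀)` is positive; for this, `T` preserves the bounded positive continuous functions
whenever the controlled kernel `p` is weakly continuous and `U` is compact. Continuity of `J_n`
matters because the Bochner integral of a nonintegrable function is `0`. A jointly continuous
density on a compact space makes `p` weakly continuous.
-/

open scoped NNReal BoundedContinuousFunction

section PositivelyHomogeneous

variable {X 𝕜 : Type*} [Field 𝕜]

/-- `J` is generated by the value iteration (VI) of the operator `T` with constant `Λ`. The initial
function `J 0` is left free. -/
def IsValueIteration (T : (X → 𝕜) → X → 𝕜) (Λ : 𝕜) (J : ℕ → X → 𝕜) : Prop :=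
  ∀ n x, J (n + 1) x = Λ⁻¹ * T (J n) x

/-- `V` is generated by the relative value iteration (RVI) of the operator `T` with reference point
`x₀`. The initial function `V 0` is left free. -/
def IsRelativeValueIteration (T : (X → 𝕜) → X → 𝕜) (x₀ : X) (V : ℕ → X → 𝕜) : Prop :=
  ∀ n x, V (n + 1) x = (V n x₀)⁻¹ * T (V n) x

variable [LinearOrder 𝕜] [IsStrictOrderedRing 𝕜] {T : (X → 𝕜) → X → 𝕜} {Λ : 𝕜} {x₀ : X}
  {J V : ℕ → X → 𝕜}

theorem IsRelativeValueIteration.succ_eq_smul (hV : IsRelativeValueIteration T x₀ V)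
    (hJ : IsValueIteration T Λ J) (hT : ∀ c : 𝕜, 0 < c → ∀ f, T (c • f) = c • T f) (hΛ : 0 < Λ)
    (hJpos : ∀ n, 0 < J n x₀) (hJV : J 0 = V 0) (n : ℕ) :
    V (n + 1) = (Λ / J n x₀) • J (n + 1) := by
  induction n with
  | zero =>
    ext x
    rw [hV, ← hJV, Pi.smul_apply, smul_eq_mul, hJ]
    field_simp
  | succ n ih =>
    have hn := hJpos n
    have hn' := hJpos (n + 1)
    ext x
    rw [hV, ih, hT _ (div_pos hΛ hn)]
    simp only [Pi.smul_apply, smul_eq_mul]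
    rw [hJ (n + 1) x]
    field_simp

theorem IsRelativeValueIteration.tendsto [TopologicalSpace 𝕜] [ContinuousMul 𝕜] [ContinuousInv₀ 𝕜]
    (hV : IsRelativeValueIteration T x₀ V) (hJ : IsValueIteration T Λ J)
    (hT : ∀ c : 𝕜, 0 < c → ∀ f, T (c • f) = c • T f) (hΛ : 0 < Λ) (hJpos : ∀ n, 0 < J n x₀)
    (hJV : J 0 = V 0) {x : X} {a b : 𝕜} (hx : Tendsto (fun n => J n x) atTop (𝓝 a))
    (hx₀ : Tendsto (fun n => J n x₀) atTop (𝓝 b)) (hb : b ≠ 0) :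
    Tendsto (fun n => V n x) atTop (𝓝 (Λ * a / b)) := by
  have hVJ (n : ℕ) : V (n + 1) x = Λ * J (n + 1) x / J n x₀ := by
    rw [hV.succ_eq_smul hJ hT hΛ hJpos hJV n, Pi.smul_apply, smul_eq_mul, div_mul_eq_mul_div]
  rw [← tendsto_add_atTop_iff_nat 1]
  simp only [hVJ]
  exact ((hx.comp (tendsto_add_atTop_nat 1)).const_mul Λ).div hx₀ hb

end PositivelyHomogeneous

/-- Bounded, strictly positive, continuous functions: the class on which value iteration is run.
Positivity bounds them below; boundedness makes them integrable against every finite measure. -/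
structure IsBoundedPositiveContinuous {S : Type*} [TopologicalSpace S] (f : S → ℝ) : Prop where
  continuous : Continuous f
  pos : ∀ x, 0 < f x
  bddAbove : BddAbove (Set.range f)

namespace IsBoundedPositiveContinuous

variable {S : Type*} [TopologicalSpace S] {f : S → ℝ}

theorem exists_boundedContinuousFunction (hf : IsBoundedPositiveContinuous f) :
    ∃ g : S →ᵇ ℝ, ⇑g = f := by
  obtain ⟨C, hC⟩ := hf.bddAbove
  refine ⟨.ofNormedAddCommGroup f hf.continuous C fun x => ?_, rfl⟩
  rw [Real.norm_of_nonneg (hf.pos x).le]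
  exact hC ⟨x, rfl⟩

theorem const_mul (hf : IsBoundedPositiveContinuous f) {c : ℝ} (hc : 0 < c) :
    IsBoundedPositiveContinuous fun x => c * f x where
  continuous := hf.continuous.const_mul c
  pos x := mul_pos hc (hf.pos x)
  bddAbove := by
    obtain ⟨C, hC⟩ := hf.bddAbove
    refine ⟨c * C, ?_⟩
    rintro _ ⟨x, rfl⟩
    exact mul_le_mul_of_nonneg_left (hC ⟨x, rfl⟩) hc.le

variable [MeasurableSpace S] [OpensMeasurableSpace S]

theorem integral_pos (hf : IsBoundedPositiveContinuous f) (μ : Measure S) [IsFiniteMeasure μ]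
    [NeZero μ] : 0 < ∫ y, f y ∂μ := by
  obtain ⟨g, rfl⟩ := hf.exists_boundedContinuousFunction
  rw [integral_pos_iff_support_of_nonneg (fun x => (hf.pos x).le) (g.integrable μ),
    Function.support_eq_univ fun x => (hf.pos x).ne']
  exact NeZero.pos _

end IsBoundedPositiveContinuous

section Bellman

variable {S U : Type*} [MeasurableSpace S]

/-- The multiplicative (risk-sensitive) Bellman operator of the controlled transition kernel `p`
with running cost `k`, acting on real functions; the infimum is taken in `ℝ`. -/
noncomputable def riskSensitiveBellman (k : S → U → ℝ) (p : S → U → ProbabilityMeasure S)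
    (f : S → ℝ) (x : S) : ℝ :=
  ⨅ u, Real.exp (k x u) * ∫ y, f y ∂(p x u : Measure S)

variable {k : S → U → ℝ} {p : S → U → ProbabilityMeasure S} {f : S → ℝ}

theorem riskSensitiveBellman_smul {c : ℝ} (hc : 0 ≤ c) (f : S → ℝ) :
    riskSensitiveBellman k p (c • f) = c • riskSensitiveBellman k p f := by
  ext x
  simp only [riskSensitiveBellman, Pi.smul_apply, smul_eq_mul, integral_const_mul,
    Real.mul_iInf_of_nonneg hc, mul_left_comm]

variable [TopologicalSpace S] [OpensMeasurableSpace S] [TopologicalSpace U]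

theorem IsBoundedPositiveContinuous.continuous_exp_mul_integral
    (hf : IsBoundedPositiveContinuous f) (hk : Continuous (Function.uncurry k))
    (hp : Continuous (Function.uncurry p)) :
    Continuous fun q : S × U => Real.exp (k q.1 q.2) * ∫ y, f y ∂(p q.1 q.2 : Measure S) := by
  obtain ⟨g, rfl⟩ := hf.exists_boundedContinuousFunction
  exact (Real.continuous_exp.comp hk).mul
    (ProbabilityMeasure.continuous_iff_forall_continuous_integral.1 hp g)

variable [CompactSpace U]

theorem IsBoundedPositiveContinuous.continuous_riskSensitiveBellman
    (hf : IsBoundedPositiveContinuous f) (hk : Continuous (Function.uncurry k))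
    (hp : Continuous (Function.uncurry p)) : Continuous (riskSensitiveBellman k p f) :=
  (isCompact_univ.continuous_sInf (hf.continuous_exp_mul_integral hk hp)).congr fun x => by
    rw [Set.image_univ, sInf_range, riskSensitiveBellman]

variable [Nonempty U]

theorem IsBoundedPositiveContinuous.exists_riskSensitiveBellman_eq
    (hf : IsBoundedPositiveContinuous f) (hk : Continuous (Function.uncurry k))
    (hp : Continuous (Function.uncurry p)) (x : S) :
    ∃ u, Real.exp (k x u) * ∫ y, f y ∂(p x u : Measure S) = riskSensitiveBellman k p f x :=
  (isCompact_range ((hf.continuous_exp_mul_integral hk hp).comp (.prodMk_right x))).sInf_mem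
    (Set.range_nonempty _)

theorem IsBoundedPositiveContinuous.map_riskSensitiveBellman (hf : IsBoundedPositiveContinuous f)
    (hk : Continuous (Function.uncurry k)) (hkb : BddAbove (Set.range (Function.uncurry k)))
    (hp : Continuous (Function.uncurry p)) :
    IsBoundedPositiveContinuous (riskSensitiveBellman k p f) where
  continuous := hf.continuous_riskSensitiveBellman hk hp
  pos x := by
    obtain ⟨u, hu⟩ := hf.exists_riskSensitiveBellman_eq hk hp x
    exact hu ▸ mul_pos (Real.exp_pos _) (hf.integral_pos _)
  bddAbove := by
    obtain ⟨K, hK⟩ := hkb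
    obtain ⟨g, rfl⟩ := hf.exists_boundedContinuousFunction
    refine ⟨Real.exp K * ‖g‖, ?_⟩
    rintro _ ⟨x, rfl⟩
    obtain ⟨u, hu⟩ := hf.exists_riskSensitiveBellman_eq hk hp x
    rw [← hu]
    gcongr
    · exact (hf.integral_pos _).le
    · exact hK ⟨(x, u), rfl⟩
    · exact (le_abs_self _).trans (g.norm_integral_le_norm _)

theorem IsValueIteration.isBoundedPositiveContinuous {Λ : ℝ} {J : ℕ → S → ℝ}
    (hJ : IsValueIteration (riskSensitiveBellman k p) Λ J)
    (hk : Continuous (Function.uncurry k)) (hkb : BddAbove (Set.range (Function.uncurry k)))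
    (hp : Continuous (Function.uncurry p)) (hΛ : 0 < Λ) (hJ0 : IsBoundedPositiveContinuous (J 0))
    (n : ℕ) : IsBoundedPositiveContinuous (J n) := by
  induction n with
  | zero => exact hJ0
  | succ n ih =>
    rw [funext (hJ n)]
    exact (ih.map_riskSensitiveBellman hk hkb hp).const_mul (inv_pos.2 hΛ)

end Bellman

section Density

variable {Q S E : Type*} [TopologicalSpace Q] [FirstCountableTopology Q] [LocallyCompactSpace Q]
  [TopologicalSpace S] [CompactSpace S] [MeasurableSpace S] [OpensMeasurableSpace S]
  {γ : Measure S} [IsLocallyFiniteMeasure γ] {ψ : Q → S → ℝ≥0}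

theorem continuous_integral_withDensity [NormedAddCommGroup E] [NormedSpace ℝ E]
    [SecondCountableTopologyEither S E] (hψ : Continuous (Function.uncurry ψ)) {f : S → E}
    (hf : Continuous f) :
    Continuous fun q => ∫ y, f y ∂γ.withDensity fun y => (ψ q y : ENNReal) := by
  have hψm (q : Q) : Measurable (ψ q) := (hψ.uncurry_left q).measurable
  simp only [fun q => integral_withDensity_eq_integral_smul (μ := γ) (hψm q) f]
  have hψf : Continuous (Function.uncurry fun q y => ψ q y • f y) :=
    hψ.smul (hf.comp continuous_snd)
  simpa only [Measure.restrict_univ] using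
    continuous_parametric_integral_of_continuous hψf (μ := γ) isCompact_univ

theorem continuous_probabilityMeasure_of_density {P : Q → ProbabilityMeasure S}
    (hP : ∀ q, (P q : Measure S) = γ.withDensity fun y => (ψ q y : ENNReal))
    (hψ : Continuous (Function.uncurry ψ)) : Continuous P := by
  rw [ProbabilityMeasure.continuous_iff_forall_continuous_integral]
  intro f
  simp only [hP]
  exact continuous_integral_withDensity hψ f.continuous

end Density

theorem rvi_converges_of_vi_converges_general
    {S U : Type*} [TopologicalSpace S] [MeasurableSpace S] [OpensMeasurableSpace S]
    [TopologicalSpace U] [CompactSpace U] [Nonempty U]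
    {p : S → U → ProbabilityMeasure S} (hp : Continuous (Function.uncurry p))
    {k : S → U → ℝ} (hk : Continuous (Function.uncurry k))
    (hkb : BddAbove (Set.range (Function.uncurry k)))
    {Λ : ℝ} (hΛ : 0 < Λ) {x₀ : S} {J V : ℕ → S → ℝ}
    (hJ0 : IsBoundedPositiveContinuous (J 0)) (hJV : J 0 = V 0)
    (hJ : IsValueIteration (riskSensitiveBellman k p) Λ J)
    (hV : IsRelativeValueIteration (riskSensitiveBellman k p) x₀ V)
    {x : S} {a b : ℝ} (hx : Tendsto (fun n => J n x) atTop (𝓝 a))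
    (hx₀ : Tendsto (fun n => J n x₀) atTop (𝓝 b)) (hb : b ≠ 0) :
    Tendsto (fun n => V n x) atTop (𝓝 (Λ * a / b)) :=
  hV.tendsto hJ (fun _ hc => riskSensitiveBellman_smul hc.le) hΛ
    (fun n => (hJ.isBoundedPositiveContinuous hk hkb hp hΛ hJ0 n).pos x₀) hJV hx hx₀ hb

/-- **Convergence of the VI implies convergence of the RVI:**
if `J n` converges pointwise to `J∞` with `J∞ x₀ > 0`, then `V n` converges
pointwise to `x ↦ Λ * J∞ x / J∞ x₀`. -/
theorem rvi_converges_of_vi_converges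
    {S U : Type*} [MetricSpace S] [CompactSpace S] [MeasurableSpace S] [BorelSpace S]
    [MetricSpace U] [CompactSpace U] [Nonempty U]
    (γ : Measure S) [IsFiniteMeasure γ]
    (hγ : ∀ O : Set S, IsOpen O → O.Nonempty → 0 < γ O)
    (φ : S → U → S → ℝ)
    (hφc : Continuous fun q : S × U × S => φ q.1 q.2.1 q.2.2)
    (hφpos : ∀ x u y, 0 < φ x u y)
    (p : S → U → Measure S)
    (hp : ∀ x u, p x u = γ.withDensity fun y => ENNReal.ofReal (φ x u y))
    (hprob : ∀ x u, IsProbabilityMeasure (p x u))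
    (k : S → U → ℝ) (hk : Continuous fun q : S × U => k q.1 q.2)
    (Λ : ℝ) (hΛ : 0 < Λ) (x₀ : S)
    (J V : ℕ → S → ℝ)
    (hJ0c : Continuous (J 0)) (hJ0pos : ∀ x, 0 < J 0 x) (hJV0 : J 0 = V 0)
    (hJ : ∀ n x, J (n + 1) x = Λ⁻¹ * ⨅ u : U, Real.exp (k x u) * ∫ y, J n y ∂(p x u))
    (hV : ∀ n x, V (n + 1) x
        = (V n x₀)⁻¹ * ⨅ u : U, Real.exp (k x u) * ∫ y, V n y ∂(p x u))
    (Jlim : S → ℝ)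
    (hJlim : ∀ x : S, Filter.Tendsto (fun n => J n x) Filter.atTop (nhds (Jlim x)))
    (hJlimpos : 0 < Jlim x₀) :
    ∀ x : S, Filter.Tendsto (fun n => V n x) Filter.atTop
      (nhds (Λ * Jlim x / Jlim x₀)) := by
  let P (x : S) (u : U) : ProbabilityMeasure S := ⟨p x u, hprob x u⟩
  have hP : Continuous (Function.uncurry P) :=
    continuous_probabilityMeasure_of_density (γ := γ)
      (ψ := fun (q : S × U) y => (φ q.1 q.2 y).toNNReal) (fun q => hp q.1 q.2)
      (continuous_real_toNNReal.comp (hφc.comp (Homeomorph.prodAssoc S U S).continuous))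
  exact fun x => rvi_converges_of_vi_converges_general hP hk (isCompact_range hk).bddAbove hΛ
    ⟨hJ0c, hJ0pos, (isCompact_range hJ0c).bddAbove⟩ hJV0 hJ hV (hJlim x) (hJlim x₀) hJlimpos.ne'
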